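/- Let G be a graph that can be decomposed into an ESET graph K on n vertices with a connection vertex u ∈ V(K), and a path P with V(P) ∩ V(K) = {u}. Then pn(G) ≤ ⌈n/2⌉. -/

import Mathlib

open SimpleGraph

variable {V : Type*}

/-- A path decomposition of a simple graph `G`: a list of nontrivial paths of `G`
that are pairwise edge-disjoint and together cover every edge of `G`. -/
structure PathDecomp (G : SimpleGraph V) where
  paths : List (Σ a b : V, G.Walk a b)
  nontrivial : ∀ p ∈ paths, 0 < p.2.2.length
  isPath : ∀ p ∈ paths, p.2.2.IsPath
  edgeDisjoint : paths.Pairwise fun p q => ∀ e, e ∈ p.2.2.edges → e ∉ q.2.2.edges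
  covers : ∀ e ∈ G.edgeSet, ∃ p ∈ paths, e ∈ p.2.2.edges

/-- Cardinality of a path decomposition. -/
def pdCard {G : SimpleGraph V} (D : PathDecomp G) : ℕ := D.paths.length

/-- `ends D u` is the number of paths in `D` having `u` as an end vertex. -/
def ends [DecidableEq V] {G : SimpleGraph V} (D : PathDecomp G) (u : V) : ℕ :=
  (D.paths.filter fun p => p.1 = u ∨ p.2.1 = u).length

/-- The path number: minimum cardinality of a path decomposition. -/
noncomputable def pn (G : SimpleGraph V) : ℕ :=
  sInf {n | ∃ D : PathDecomp G, pdCard D = n}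

/-- Degree as the `ncard` of the neighbor set (no decidability needed). -/
noncomputable def ndeg (G : SimpleGraph V) (v : V) : ℕ := {w | G.Adj v w}.ncard

/-- A SET graph: the set of even-degree vertices consists of exactly three
mutually adjacent vertices, and every odd-degree vertex has at least two
even-degree neighbors. -/
def IsSETGraph (G : SimpleGraph V) : Prop :=
  (∃ a b c : V, a ≠ b ∧ a ≠ c ∧ b ≠ c ∧
      {v : V | Even (ndeg G v)} = {a, b, c} ∧
      G.Adj a b ∧ G.Adj a c ∧ G.Adj b c) ∧
  ∀ v : V, Odd (ndeg G v) →
    ∃ w₁ w₂ : V, w₁ ≠ w₂ ∧ G.Adj v w₁ ∧ G.Adj v w₂ ∧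
      Even (ndeg G w₁) ∧ Even (ndeg G w₂)


/-- An extended SET (ESET) graph with connection vertex `u`: either `K` itself is a
SET graph (type (i), every vertex is a connection vertex), or `K` is obtained from a
SET graph by adding the new vertex `u` adjacent to one odd-degree vertex and one
even-degree vertex of it (type (ii)). -/
def IsESETWithConn (K : SimpleGraph V) (u : V) : Prop :=
  IsSETGraph K ∨
  ∃ (x y : V) (hx : x ≠ u) (hy : y ≠ u),
    K.neighborSet u = {x, y} ∧
    IsSETGraph (K.induce {v | v ≠ u}) ∧
    Odd (ndeg (K.induce {v | v ≠ u}) ⟨x, hx⟩) ∧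
    Even (ndeg (K.induce {v | v ≠ u}) ⟨y, hy⟩)

/-- `v` and `w` are consecutive entries of `l`, in either order. -/
def Consec (l : List V) (v w : V) : Prop := [v, w] <:+: l ∨ [w, v] <:+: l

lemma Consec.symm {l : List V} {v w : V} (h : Consec l v w) : Consec l w v := Or.symm h

lemma consec_reverse {l : List V} {v w : V} : Consec l.reverse v w ↔ Consec l v w := by
  unfold Consec
  rw [← List.reverse_infix, ← List.reverse_infix (l₁ := [w, v])]
  simp [or_comm]

lemma not_consec_singleton {u v w : V} : ¬ Consec [u] v w := by
  rintro (h | h) <;> simpa using h.length_le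

lemma consec_pair {u z v w : V} : Consec [u, z] v w ↔ s(v, w) = s(u, z) := by
  simp only [Consec, List.infix_cons_iff, List.cons_prefix_cons, List.infix_nil, Sym2.eq_iff]
  simp
  grind

lemma Consec.mem_left {l : List V} {v w : V} (h : Consec l v w) : v ∈ l := by
  rcases h with h | h <;> exact h.subset (by simp)

lemma Consec.mem_right {l : List V} {v w : V} (h : Consec l v w) : w ∈ l := h.symm.mem_left

lemma pair_infix_append_cons {A B : List V} {x v w : V} :
    [v, w] <:+: A ++ x :: B ↔
      [v, w] <:+: A ∨ [v, w] <:+: x :: B ∨ (A.getLast? = some v ∧ w = x) := by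
  induction A with
  | nil => simp
  | cons a A ih =>
    rw [List.cons_append, List.infix_cons_iff, ih, List.infix_cons_iff (l₂ := A)]
    cases A with
    | nil => simp; grind
    | cons b A => simp; grind

lemma consec_append_cons {A B : List V} {x v w : V} :
    Consec (A ++ x :: B) v w ↔ Consec A v w ∨ Consec (x :: B) v w ∨
      (A.getLast? = some v ∧ w = x) ∨ (A.getLast? = some w ∧ v = x) := by
  simp only [Consec, pair_infix_append_cons]
  grind

lemma consec_append_cons_iff {A B : List V} {x v w : V} :
    Consec (A ++ x :: B) v w ↔ Consec (A ++ [x]) v w ∨ Consec (x :: B) v w := by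
  simp only [consec_append_cons, not_consec_singleton]
  grind

lemma consec_map {W : Type*} {f : W → V} {l : List W} {v w : V} :
    Consec (l.map f) v w ↔ ∃ v' w', f v' = v ∧ f w' = w ∧ Consec l v' w' := by
  simp only [Consec, List.infix_map_iff]
  constructor
  · rintro (⟨t, ht, h⟩ | ⟨t, ht, h⟩) <;>
    · rw [eq_comm, List.map_eq_cons_iff] at h
      obtain ⟨a, t, rfl, rfl, h⟩ := h
      rw [List.map_eq_cons_iff] at h
      obtain ⟨b, t, rfl, rfl, h⟩ := h
      rw [List.map_eq_nil_iff] at h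
      subst h
      grind
  · rintro ⟨v', w', rfl, rfl, h | h⟩
    · exact Or.inl ⟨_, h, rfl⟩
    · exact Or.inr ⟨_, h, rfl⟩

section PathSystem

variable {k : ℕ}

/-- The `i`-th list of the family, read from its end `ε = (i, b)`. -/
def side (p : Fin k → List V) (ε : Fin k × Bool) : List V :=
  if ε.2 then (p ε.1).reverse else p ε.1

/-- Replace one list of the family, the new list being read from the end `ε`. -/
def setSide (p : Fin k → List V) (ε : Fin k × Bool) (l : List V) : Fin k → List V :=
  Function.update p ε.1 (if ε.2 then l.reverse else l)

/-- A family of edge-disjoint paths, possibly trivial, given by their vertex lists. -/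
structure IsPathSystem (p : Fin k → List V) : Prop where
  ne_nil : ∀ i, p i ≠ []
  nodup : ∀ i, (p i).Nodup
  unique : ∀ i j v w, Consec (p i) v w → Consec (p j) v w → i = j

/-- The edge `vw` lies on some path of the family. -/
def Covered (p : Fin k → List V) (v w : V) : Prop := ∃ i, Consec (p i) v w

/-- The number of path ends at `v`; a trivial path has two ends. -/
noncomputable def endCount (p : Fin k → List V) (v : V) : ℕ :=
  {ε | (side p ε).head? = some v}.ncard

lemma Covered.symm {p : Fin k → List V} {v w : V} (h : Covered p v w) : Covered p w v :=
  h.imp fun _ => Consec.symm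

lemma consec_side {p : Fin k → List V} {ε : Fin k × Bool} {v w : V} :
    Consec (side p ε) v w ↔ Consec (p ε.1) v w := by
  unfold side
  split_ifs <;> simp [consec_reverse]

lemma IsPathSystem.nodup_side {p : Fin k → List V} (hp : IsPathSystem p) (ε : Fin k × Bool) :
    (side p ε).Nodup := by
  unfold side
  split_ifs <;> simp [hp.nodup]

lemma side_not {p : Fin k → List V} {i : Fin k} {b : Bool} :
    side p (i, !b) = (side p (i, b)).reverse := by
  cases b <;> simp [side]

lemma side_setSide_self {p : Fin k → List V} {ε : Fin k × Bool} {l : List V} :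
    side (setSide p ε l) ε = l := by
  obtain ⟨i, b⟩ := ε
  cases b <;> simp [side, setSide]

lemma side_setSide_of_ne {p : Fin k → List V} {ε ε' : Fin k × Bool} {l : List V}
    (h : ε'.1 ≠ ε.1) : side (setSide p ε l) ε' = side p ε' := by
  simp [side, setSide, h]

lemma eq_not_of_ne {ε ε' : Fin k × Bool} (h : ε' ≠ ε) (h1 : ε'.1 = ε.1) :
    ε' = (ε.1, !ε.2) := by
  obtain ⟨i, b⟩ := ε
  obtain ⟨j, c⟩ := ε'
  cases b <;> cases c <;> simp_all

lemma head?_side_setSide_of_ne {p : Fin k → List V} {ε ε' : Fin k × Bool} {l : List V}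
    (hl : l.getLast? = (side p ε).getLast?) (h : ε' ≠ ε) :
    (side (setSide p ε l) ε').head? = (side p ε').head? := by
  by_cases h1 : ε'.1 = ε.1
  · rw [eq_not_of_ne h h1, side_not, side_not, Prod.mk.eta, side_setSide_self]
    simpa using hl
  · rw [side_setSide_of_ne h1]

lemma covered_setSide {p : Fin k → List V} {ε : Fin k × Bool} {l : List V} {v w : V} :
    Covered (setSide p ε l) v w ↔ Consec l v w ∨ ∃ i, i ≠ ε.1 ∧ Consec (p i) v w := by
  have key : Consec (setSide p ε l ε.1) v w ↔ Consec l v w := by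
    rw [← consec_side, side_setSide_self]
  constructor
  · rintro ⟨i, hi⟩
    by_cases h : i = ε.1
    · subst h
      exact Or.inl (key.1 hi)
    · exact Or.inr ⟨i, h, by simpa [setSide, h] using hi⟩
  · rintro (h | ⟨i, h, hi⟩)
    · exact ⟨_, key.2 h⟩
    · exact ⟨i, by simpa [setSide, h] using hi⟩

lemma IsPathSystem.setSide {p : Fin k → List V} (hp : IsPathSystem p) {ε : Fin k × Bool}
    {l : List V} (hne : l ≠ []) (hnd : l.Nodup)
    (hl : ∀ v w, Consec l v w → ∀ i, i ≠ ε.1 → ¬ Consec (p i) v w) :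
    IsPathSystem (setSide p ε l) := by
  have hself : _root_.setSide p ε l ε.1 = if ε.2 then l.reverse else l := by simp [_root_.setSide]
  have hother : ∀ i, i ≠ ε.1 → _root_.setSide p ε l i = p i := fun i h => by simp [_root_.setSide, h]
  have key : ∀ v w, Consec (_root_.setSide p ε l ε.1) v w ↔ Consec l v w := fun v w => by
    rw [← consec_side, side_setSide_self]
  refine ⟨fun i => ?_, fun i => ?_, fun i j v w h₁ h₂ => ?_⟩
  · by_cases h : i = ε.1
    · subst h; rw [hself]; split_ifs <;> simpa
    · rw [hother i h]; exact hp.ne_nil i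
  · by_cases h : i = ε.1
    · subst h; rw [hself]; split_ifs <;> simpa
    · rw [hother i h]; exact hp.nodup i
  · by_cases hi : i = ε.1 <;> by_cases hj : j = ε.1
    · rw [hi, hj]
    · subst hi; rw [key] at h₁; rw [hother j hj] at h₂; exact absurd h₂ (hl v w h₁ j hj)
    · subst hj; rw [key] at h₂; rw [hother i hi] at h₁; exact absurd h₁ (hl v w h₂ i hi)
    · rw [hother i hi] at h₁; rw [hother j hj] at h₂; exact hp.unique i j v w h₁ h₂

lemma endCount_eq_sum [DecidableEq V] (p : Fin k → List V) (v : V) :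
    endCount p v = ∑ ε, if (side p ε).head? = some v then 1 else 0 := by
  rw [endCount, Set.ncard_eq_toFinset_card', Finset.sum_boole]
  simp

lemma endCount_setSide [DecidableEq V] {p : Fin k → List V} {ε : Fin k × Bool} {l : List V}
    {old new : V}
    (hl : l.getLast? = (side p ε).getLast?) (hold : (side p ε).head? = some old)
    (hnew : l.head? = some new) (v : V) :
    endCount (setSide p ε l) v + (if v = old then 1 else 0) =
      endCount p v + (if v = new then 1 else 0) := by
  rw [endCount_eq_sum, endCount_eq_sum, ← Finset.add_sum_erase _ _ (Finset.mem_univ ε),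
    ← Finset.add_sum_erase _ _ (Finset.mem_univ ε)]
  rw [Finset.sum_congr rfl (g := fun ε' => if (side p ε').head? = some v then 1 else 0)]
  · rw [side_setSide_self, hold, hnew]
    simp only [Option.some.injEq, eq_comm (a := v)]
    omega
  · intro ε' h
    rw [head?_side_setSide_of_ne hl (Finset.ne_of_mem_erase h)]

lemma covered_iff_side {p : Fin k → List V} (ε : Fin k × Bool) {v w : V} :
    Covered p v w ↔ Consec (side p ε) v w ∨ ∃ i, i ≠ ε.1 ∧ Consec (p i) v w := by
  rw [consec_side]
  exact ⟨fun ⟨i, hi⟩ => by by_cases h : i = ε.1 <;> grind, by rintro (h | ⟨i, -, h⟩) <;> exact ⟨_, h⟩⟩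

/-- Prolong a path of the system beyond its end `u` by a list of further vertices. -/
lemma IsPathSystem.attach {p : Fin k → List V} (hp : IsPathSystem p) {ε : Fin k × Bool} {u : V}
    (hu : (side p ε).head? = some u) {l : List V} (hnd : (l ++ side p ε).Nodup)
    (hnew : ∀ v w, Consec (l ++ [u]) v w → ¬ Covered p v w) :
    IsPathSystem (_root_.setSide p ε (l ++ side p ε)) ∧
      ∀ v w, Covered (_root_.setSide p ε (l ++ side p ε)) v w ↔
        Covered p v w ∨ Consec (l ++ [u]) v w := by
  obtain ⟨B, hB⟩ := List.head?_eq_some_iff.1 hu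
  have hc : ∀ v w, Consec (l ++ side p ε) v w ↔
      Consec (l ++ [u]) v w ∨ Consec (side p ε) v w := fun v w => by
    rw [hB, consec_append_cons_iff]
  refine ⟨hp.setSide (by simp [hB]) hnd fun v w h i hi hc' => ?_, fun v w => ?_⟩
  · rcases (hc v w).1 h with h | h
    · exact hnew v w h ⟨i, hc'⟩
    · exact hi (hp.unique _ _ v w hc' (consec_side.1 h))
  · rw [covered_setSide, covered_iff_side ε, hc]
    grind

/-- Reverse the initial segment of a path preceding the vertex `x`. -/
lemma IsPathSystem.rotate {p : Fin k → List V} (hp : IsPathSystem p) {ε : Fin k × Bool}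
    {A B : List V} {x y r : V} (hAB : side p ε = A ++ x :: B) (hy : A.head? = some y)
    (hr : A.getLast? = some r) (hxy : ¬ Covered p x y) :
    IsPathSystem (_root_.setSide p ε (A.reverse ++ x :: B)) ∧
      ∀ v w, Covered (_root_.setSide p ε (A.reverse ++ x :: B)) v w ↔
        (Covered p v w ∧ s(v, w) ≠ s(x, r)) ∨ s(v, w) = s(x, y) := by
  have hnd := hp.nodup_side ε
  rw [hAB] at hnd
  have hrA : r ∈ A := List.mem_of_getLast? hr
  have hyA : y ∈ A := List.mem_of_head? hy
  have hdis := List.nodup_append.1 hnd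
  have hrev : A.reverse.getLast? = some y := by simpa using hy
  have hxr : Consec (side p ε) x r := by
    rw [hAB, consec_append_cons]; simp [hr]
  have hold : ∀ v w, Consec (side p ε) v w ↔
      (Consec A v w ∨ Consec (x :: B) v w) ∨ s(v, w) = s(x, r) := fun v w => by
    rw [hAB, consec_append_cons, hr, Sym2.eq_iff]
    grind
  have hnew : ∀ v w, Consec (A.reverse ++ x :: B) v w ↔
      (Consec A v w ∨ Consec (x :: B) v w) ∨ s(v, w) = s(x, y) := fun v w => by
    rw [consec_append_cons, hrev, consec_reverse, Sym2.eq_iff]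
    grind
  have hxrA : ∀ v w, (Consec A v w ∨ Consec (x :: B) v w) → s(v, w) ≠ s(x, r) := by
    intro v w h he
    have hxA : x ∉ A := fun h => hdis.2.2 x h x (by simp) rfl
    have hrB : r ∉ x :: B := fun h => hdis.2.2 r hrA r h rfl
    rcases h with h | h
    · have := h.mem_left; have := h.mem_right; grind
    · have := h.mem_left; have := h.mem_right; grind
  have hcov : ∀ v w, s(v, w) = s(x, y) → ¬ Covered p v w := by
    intro v w h hc
    rcases Sym2.eq_iff.1 h with ⟨rfl, rfl⟩ | ⟨rfl, rfl⟩
    · exact hxy hc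
    · exact hxy hc.symm
  refine ⟨hp.setSide (by simp) ?_ fun v w h i hi hc => ?_, fun v w => ?_⟩
  · grind
  · rcases (hnew v w).1 h with h | h
    · exact hi (hp.unique _ _ v w hc (consec_side.1 ((hold v w).2 (Or.inl h))))
    · exact hcov v w h ⟨i, hc⟩
  · rw [covered_setSide, covered_iff_side ε, hnew, hold]
    have : ∀ i, i ≠ ε.1 → Consec (p i) v w → s(v, w) ≠ s(x, r) := by
      intro i hi hc he
      refine hi (hp.unique _ _ v w hc (consec_side.1 ((hold v w).2 (Or.inr he))))
    have := hxrA v w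
    grind

/-- Lovász' rotation argument: if every vertex of `A` is the end of a designated path, and on
the designated paths the vertex preceding `x` always lies in `A`, then any edge from `x` to a
vertex of `A` can be added to the system, moving one path end from `y` to `x`. -/
lemma IsPathSystem.augment [DecidableEq V] {x : V} (e : V → Fin k × Bool) (A : Finset V) :
    ∀ (p : Fin k → List V) (y : V), IsPathSystem p → y ∈ A → y ≠ x → ¬ Covered p x y →
      (∀ a ∈ A, (side p (e a)).head? = some a) →
      (∀ a ∈ A, ∀ r, [r, x] <:+: side p (e a) → r ∈ A) →
      ∃ p' : Fin k → List V, IsPathSystem p' ∧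
        (∀ v w, Covered p' v w ↔ Covered p v w ∨ s(v, w) = s(x, y)) ∧
        ∀ v, endCount p' v + (if v = y then 1 else 0) =
          endCount p v + (if v = x then 1 else 0) := by
  induction A using Finset.strongInduction with
  | H A ih =>
  intro p y hp hyA hyx hxy hhead hpred
  by_cases hx : x ∈ side p (e y)
  · obtain ⟨C, B, hCB⟩ := List.append_of_mem hx
    have hC : C ≠ [] := by
      rintro rfl
      have := hhead y hyA
      simp [hCB] at this
      exact hyx this.symm
    have hCy : C.head? = some y := by
      have := hhead y hyA
      rwa [hCB, List.head?_append_of_ne_nil _ hC] at this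
    obtain ⟨r, hr⟩ : ∃ r, C.getLast? = some r := ⟨_, List.getLast?_eq_some_getLast hC⟩
    have hrx : [r, x] <:+: side p (e y) := by
      rw [hCB, pair_infix_append_cons]
      simp [hr]
    have hcov : Covered p x r := ⟨_, consec_side.1 (Or.inr hrx)⟩
    have hry : r ≠ y := by rintro rfl; exact hxy hcov
    have hnd := hp.nodup_side (e y)
    have hrC : r ∈ C := List.mem_of_getLast? hr
    have hrnex : r ≠ x := by rw [hCB] at hnd; grind
    obtain ⟨hp', hcov'⟩ := hp.rotate hCB hCy hr hxy
    set p' := _root_.setSide p (e y) (C.reverse ++ x :: B) with hp'def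
    have hlast : (C.reverse ++ x :: B).getLast? = (side p (e y)).getLast? := by
      rw [hCB, List.getLast?_append_of_ne_nil _ (by simp), List.getLast?_append_of_ne_nil _ (by simp)]
    have hne : ∀ a ∈ A, a ≠ y → e a ≠ e y := by
      intro a ha hay hea
      have h1 := hhead a ha
      rw [hea, hhead y hyA] at h1
      exact hay (by simpa using h1.symm)
    have hxr : ¬ Covered p' x r := by
      rw [hcov']
      simp [hry, hrnex]
    obtain ⟨q, hq, hqc, hqe⟩ := ih (A.erase y) (Finset.erase_ssubset hyA) p' r hp'
      (Finset.mem_erase.2 ⟨hry, hpred y hyA r hrx⟩) hrnex hxr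
      (fun a ha => by
        rw [Finset.mem_erase] at ha
        rw [hp'def, head?_side_setSide_of_ne hlast (hne a ha.2 ha.1), hhead a ha.2])
      (fun a ha t ht => by
        rw [Finset.mem_erase] at ha ⊢
        have ht' : [t, x] <:+: side p (e a) := by
          by_cases h1 : (e a).1 = (e y).1
          · have h2 := eq_not_of_ne (hne a ha.2 ha.1) h1
            rw [h2, side_not, Prod.mk.eta] at ht ⊢
            rw [hp'def, side_setSide_self] at ht
            rw [hCB]
            have hxC : x ∉ C := by rw [hCB] at hnd; grind
            simp only [List.reverse_append, List.reverse_cons, List.append_assoc, List.cons_append,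
              List.nil_append, List.reverse_reverse, pair_infix_append_cons] at ht ⊢
            rcases ht with ht | ht | ht
            · exact Or.inl ht
            · rw [List.infix_cons_iff] at ht
              exfalso
              rcases ht with ht | ht
              · simp only [List.cons_prefix_cons] at ht
                obtain ⟨rfl, C', hC'⟩ := ht
                exact hxC (by rw [← hC']; simp)
              · exact hxC (ht.subset (by simp))
            · exact Or.inr (Or.inr ht)
          · rwa [hp'def, side_setSide_of_ne h1] at ht
        refine ⟨?_, hpred a ha.2 t ht'⟩
        rintro rfl
        exact hxy ⟨_, consec_side.1 (Or.inr ht')⟩)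
    refine ⟨q, hq, fun v w => ?_, fun v => ?_⟩
    · rw [hqc, hcov']
      constructor
      · rintro ((h | h) | h)
        · exact Or.inl h.1
        · exact Or.inr h
        · rcases Sym2.eq_iff.1 h with ⟨rfl, rfl⟩ | ⟨rfl, rfl⟩
          · exact Or.inl hcov
          · exact Or.inl hcov.symm
      · tauto
    · have h1 := hqe v
      have h2 := endCount_setSide (new := r) hlast (hhead y hyA) (by simp [hr]) v
      rw [← hp'def] at h2
      omega
  · have hpair : ∀ v w, Consec ([x] ++ [y]) v w ↔ s(v, w) = s(x, y) := fun v w => consec_pair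
    obtain ⟨hp', hcov'⟩ := hp.attach (hhead y hyA) (l := [x])
      (by simpa using ⟨hx, hp.nodup_side _⟩)
      (fun v w h hc => by
        rcases Sym2.eq_iff.1 ((hpair v w).1 h) with ⟨rfl, rfl⟩ | ⟨rfl, rfl⟩
        · exact hxy hc
        · exact hxy hc.symm)
    refine ⟨_, hp', fun v w => by rw [hcov', hpair], endCount_setSide ?_ (hhead y hyA) (by simp)⟩
    obtain ⟨B, hB⟩ := List.head?_eq_some_iff.1 (hhead y hyA)
    simp [hB]

lemma exists_end {p : Fin k → List V} {v : V} (h : 1 ≤ endCount p v) :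
    ∃ ε, (side p ε).head? = some v :=
  Set.nonempty_of_ncard_ne_zero (s := {ε | (side p ε).head? = some v}) (by
    unfold endCount at h; omega)

lemma exists_two_ends {p : Fin k → List V} {v : V} (h : 2 ≤ endCount p v) :
    ∃ ε ε', ε ≠ ε' ∧ (side p ε).head? = some v ∧ (side p ε').head? = some v := by
  obtain ⟨a, ha, b, hb, hab⟩ := (Set.one_lt_ncard_iff_nontrivial
    (s := {ε | (side p ε).head? = some v})).1 h
  exact ⟨a, b, hab, ha, hb⟩

/-- Paths of length zero alone realise any prescribed even numbers of ends. -/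
lemma exists_trivial_pathSystem [Fintype V] (f : V → ℕ) (hf : ∀ v, Even (f v)) :
    ∃ (k : ℕ) (p : Fin k → List V), 2 * k = ∑ v, f v ∧ IsPathSystem p ∧
      (∀ v w, ¬ Covered p v w) ∧ ∀ v, endCount p v = f v := by
  classical
  let ι := Σ v : V, Fin (f v / 2)
  let φ : ι ≃ Fin (Fintype.card ι) := Fintype.equivFin ι
  have h2 : ∀ v, f v / 2 * 2 = f v := fun v => Nat.div_mul_cancel (hf v).two_dvd
  have hcov : ∀ (i : Fin (Fintype.card ι)) v w, ¬ Consec [(φ.symm i).1] v w :=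
    fun i v w => not_consec_singleton
  refine ⟨Fintype.card ι, fun i => [(φ.symm i).1], ?_,
    ⟨by simp, by simp, fun i j v w h => absurd h (hcov i v w)⟩,
    fun v w ⟨i, h⟩ => hcov i v w h, fun v => ?_⟩
  · rw [Fintype.card_sigma, Finset.mul_sum]
    exact Finset.sum_congr rfl fun v _ => by simpa [mul_comm] using h2 v
  · rw [endCount_eq_sum, Fintype.sum_prod_type]
    simp only [side, List.reverse_singleton, ite_self, List.head?_cons, Option.some.injEq]
    rw [← Equiv.sum_comp φ, Fintype.sum_sigma]
    simp [Finset.sum_ite_eq', h2]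

end PathSystem

lemma ndeg_deleteEdges [DecidableEq V] [Finite V] {H : SimpleGraph V} {x y : V} (h : H.Adj x y)
    (v : V) :
    ndeg (H.deleteEdges {s(x, y)}) v + (if v = x then 1 else 0) + (if v = y then 1 else 0) =
      ndeg H v := by
  have hxy := h.ne
  unfold ndeg
  by_cases hvx : v = x
  · subst hvx
    have : {w | (H.deleteEdges {s(v, y)}).Adj v w} = {w | H.Adj v w} \ {y} := by
      ext w; simp [deleteEdges_adj]; grind
    rw [this]
    have := Set.ncard_sdiff_singleton_add_one (s := {w | H.Adj v w}) (a := y) h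
    simp [hxy]; exact this
  · by_cases hvy : v = y
    · subst hvy
      have : {w | (H.deleteEdges {s(x, v)}).Adj v w} = {w | H.Adj v w} \ {x} := by
        ext w; simp [deleteEdges_adj]; grind
      rw [this]
      have := Set.ncard_sdiff_singleton_add_one (s := {w | H.Adj v w}) (a := x) h.symm
      simp [hxy.symm]; exact this
    · have : {w | (H.deleteEdges {s(x, y)}).Adj v w} = {w | H.Adj v w} := by
        ext w; simp [deleteEdges_adj]; grind
      rw [this]
      simp [hvx, hvy]

/-- Prescribed numbers `f` of path ends, of the parity of the degrees, can be realised provided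
that `f` vanishes at no more than one non-isolated vertex. -/
theorem exists_pathSystem [Fintype V] (H : SimpleGraph V) (f : V → ℕ)
    (hpar : ∀ v, Even (f v + ndeg H v))
    (hzero : ∀ v w v' w', H.Adj v v' → H.Adj w w' → f v = 0 → f w = 0 → v = w) :
    ∃ (k : ℕ) (p : Fin k → List V), 2 * k = ∑ v, f v ∧ IsPathSystem p ∧
      (∀ v w, Covered p v w ↔ H.Adj v w) ∧ ∀ v, endCount p v = f v := by
  classical
  induction hn : H.edgeSet.ncard using Nat.strong_induction_on generalizing H f with
  | _ n ih =>
  by_cases hH : ∀ v w, ¬ H.Adj v w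
  · obtain ⟨k, p, hk, hp, hc, he⟩ := exists_trivial_pathSystem f fun v => by
      have := hpar v
      simpa [ndeg, hH] using this
    exact ⟨k, p, hk, hp, fun v w => iff_of_false (hc v w) (hH v w), he⟩
  · obtain ⟨x, y, hxy, hfx, hy⟩ : ∃ x y, H.Adj x y ∧ f x ≠ 0 ∧
        ∀ v v', H.Adj v v' → f v = 0 → v = y := by
      push Not at hH
      by_cases h0 : ∃ y x, H.Adj y x ∧ f y = 0
      · obtain ⟨y, x, hyx, hy⟩ := h0
        exact ⟨x, y, hyx.symm, fun hx => hyx.ne (hzero y x x y hyx hyx.symm hy hx),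
          fun v v' hv hf => hzero v y v' x hv hyx hf hy⟩
      · push Not at h0
        obtain ⟨x, y, h⟩ := hH
        exact ⟨x, y, h, h0 x y h, fun v v' hv hf => absurd hf (h0 v v' hv)⟩
    have hne := hxy.ne
    set H' := H.deleteEdges {s(x, y)} with hH'
    have hadj : ∀ v w, H.Adj v w ↔ H'.Adj v w ∨ s(v, w) = s(x, y) := by
      intro v w
      have : s(v, w) = s(x, y) → H.Adj v w := fun h => by
        rw [← mem_edgeSet, h]; exact hxy
      rw [hH', deleteEdges_adj, Set.mem_singleton_iff]
      tauto
    let f' : V → ℕ := fun v => if v = x then f x - 1 else if v = y then f y + 1 else f v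
    have hf' : ∀ v, f' v + (if v = x then 1 else 0) = f v + (if v = y then 1 else 0) := by
      intro v
      simp only [f']
      split_ifs <;> grind
    have hzero' : ∀ v v', H'.Adj v v' → f' v = 0 → v = x := by
      intro v v' hv h0
      by_contra hvx
      have h1 := hf' v
      simp only [h0, hvx, if_false] at h1
      have hvy : v ≠ y := by rintro rfl; simp at h1
      exact hvy (hy v v' ((hadj v v').2 (Or.inl hv)) (by omega))
    obtain ⟨k, p, hk, hp, hc, he⟩ := ih _ (by
        rw [← hn]
        refine Set.ncard_lt_ncard ?_
        rw [edgeSet_deleteEdges]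
        exact Set.sdiff_singleton_ssubset.2 hxy) H' f' (fun v => by
        have h1 := hf' v
        have h2 := ndeg_deleteEdges hxy v
        rw [← hH'] at h2
        have h3 := hpar v
        rw [Nat.even_iff] at h3 ⊢
        omega) (fun v w v' w' hv hw h1 h2 => by
        rw [hzero' v v' hv h1, hzero' w w' hw h2]) rfl
    have hsel : ∀ v, ∃ ε : Fin k × Bool, 1 ≤ f' v → (side p ε).head? = some v := by
      intro v
      by_cases h : 1 ≤ f' v
      · obtain ⟨ε, h⟩ := exists_end (p := p) (v := v) (by rwa [he])
        exact ⟨ε, fun _ => h⟩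
      · obtain ⟨ε, -⟩ := exists_end (p := p) (v := y) (by simp [he, f', hne.symm])
        exact ⟨ε, fun h' => absurd h' h⟩
    choose e hesel using hsel
    have hpos : ∀ v ∈ insert y (Finset.univ.filter fun v => H'.Adj x v), 1 ≤ f' v := by
      intro v hv
      rw [Finset.mem_insert, Finset.mem_filter] at hv
      rcases hv with rfl | ⟨-, hv⟩
      · simp [f', hne.symm]
      · by_contra h0
        exact hv.ne (hzero' v x hv.symm (by omega)).symm
    obtain ⟨q, hq, hqc, hqe⟩ := IsPathSystem.augment (x := x) e
      (insert y (Finset.univ.filter fun v => H'.Adj x v)) p y hp (by simp) hne.symm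
      (by rw [hc, hH']; simp) (fun a ha => hesel a (hpos a ha))
      (fun a _ r hr => by
        have : Covered p x r := ⟨_, consec_side.1 (Or.inr hr)⟩
        simp [(hc x r).1 this])
    refine ⟨k, q, ?_, hq, fun v w => by rw [hqc, hc, hadj], fun v => ?_⟩
    · have h1 : ∑ v, (f' v + (if v = x then 1 else 0)) =
          ∑ v, (f v + (if v = y then 1 else 0)) := Finset.sum_congr rfl fun v _ => hf' v
      simp only [Finset.sum_add_distrib, Finset.sum_ite_eq', Finset.mem_univ, if_true] at h1
      omega
    · have h1 := hqe v
      have h2 := hf' v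
      rw [he] at h1
      omega

/-- If only the vertex `c` may fail to be a path end, then at least one of any two new edges at
`x` can be added without increasing the number of paths. -/
lemma IsPathSystem.augment_or [Fintype V] [DecidableEq V] {k : ℕ} {p : Fin k → List V}
    (hp : IsPathSystem p) {x y₁ y₂ c : V} (hy : y₁ ≠ y₂) (h₁ : y₁ ≠ x) (h₂ : y₂ ≠ x)
    (hc₁ : ¬ Covered p x y₁) (hc₂ : ¬ Covered p x y₂) (hpos : ∀ v, v ≠ c → 1 ≤ endCount p v) :
    ∃ y, (y = y₁ ∨ y = y₂) ∧ ∃ q : Fin k → List V, IsPathSystem q ∧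
        (∀ v w, Covered q v w ↔ Covered p v w ∨ s(v, w) = s(x, y)) ∧
        ∀ v, endCount q v + (if v = y then 1 else 0) =
          endCount p v + (if v = x then 1 else 0) := by
  classical
  have hsel : ∀ v, ∃ ε : Fin k × Bool, v ≠ c → (side p ε).head? = some v := by
    intro v
    obtain ⟨w, hw⟩ : ∃ w, w ≠ c := by
      by_cases h : y₁ = c
      · exact ⟨y₂, fun h' => hy (h.trans h'.symm)⟩
      · exact ⟨y₁, h⟩
    by_cases h : v = c
    · obtain ⟨ε, -⟩ := exists_end (hpos w hw)
      exact ⟨ε, fun h' => absurd h h'⟩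
    · obtain ⟨ε, hε⟩ := exists_end (hpos v h)
      exact ⟨ε, fun _ => hε⟩
  choose e he using hsel
  let R : V → V → Prop := fun w v => (side p (e v)).head? = some v ∧ [w, x] <:+: side p (e v)
  have hRcov : ∀ w v, R w v → Covered p x w := fun w v h => ⟨_, consec_side.1 (Or.inr h.2)⟩
  have hR : Relator.RightUnique R := by
    intro w v v' ⟨hv, hwv⟩ ⟨hv', hwv'⟩
    have hi : (e v).1 = (e v').1 :=
      hp.unique _ _ w x (consec_side.1 (Or.inl hwv)) (consec_side.1 (Or.inl hwv'))
    have hee : e v = e v' := by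
      by_contra hne
      rw [eq_not_of_ne hne hi, side_not, Prod.mk.eta, ← List.reverse_infix] at hwv
      simp only [List.reverse_cons, List.reverse_nil, List.nil_append, List.cons_append,
        List.reverse_reverse] at hwv
      have hnd := hp.nodup_side (e v')
      obtain ⟨C, B, hCB⟩ := hwv
      rw [← hCB] at hwv' hnd
      rw [List.append_assoc, List.cons_append, pair_infix_append_cons] at hwv'
      rcases hwv' with h | h | h
      · have := h.subset (a := x) (by simp)
        grind
      · rw [List.infix_cons_iff, List.cons_prefix_cons] at h
        rcases h with h | h
        · grind
        · have := h.subset (a := x) (by simp)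
          grind
      · have := List.mem_of_getLast? h.1
        grind
    rw [hee, hv'] at hv
    simpa using hv.symm
  have hnotR : ∀ y y', y ≠ y' → ¬ Covered p x y → ¬ Relation.ReflTransGen R y y' := by
    intro y y' hyy hy h
    rcases Relation.ReflTransGen.cases_head h with h | ⟨z, hz, -⟩
    · exact hyy h
    · exact hy (hRcov y z hz)
  obtain ⟨y, hy, hyx, hyc, hcy⟩ : ∃ y, (y = y₁ ∨ y = y₂) ∧ y ≠ x ∧ ¬ Covered p x y ∧
      ¬ Relation.ReflTransGen R c y := by
    by_contra! hcon
    have h1 := hcon y₁ (Or.inl rfl) h₁ hc₁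
    have h2 := hcon y₂ (Or.inr rfl) h₂ hc₂
    rcases Relation.ReflTransGen.total_of_right_unique hR h1 h2 with h | h
    · exact hnotR _ _ hy hc₁ h
    · exact hnotR _ _ hy.symm hc₂ h
  have hA : ∀ a, ¬ Relation.ReflTransGen R c a → (side p (e a)).head? = some a := by
    intro a ha
    refine he a ?_
    rintro rfl
    exact ha .refl
  refine ⟨y, hy, IsPathSystem.augment e
    (Finset.univ.filter fun a => ¬ Relation.ReflTransGen R c a) p y hp (by simpa using hcy) hyx hyc
    (fun a ha => hA a (by simpa using ha)) (fun a ha r hr => ?_)⟩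
  simp only [Finset.mem_filter, Finset.mem_univ, true_and] at ha ⊢
  exact fun h => ha (h.tail ⟨hA a ha, hr⟩)

/-- `K` splits into at most `(n + 1) / 2` paths, two ends of which are at `u`. -/
def HasDoubleEnd (K : SimpleGraph V) (u : V) (n : ℕ) : Prop :=
  ∃ (k : ℕ) (p : Fin k → List V), 2 * k ≤ n + 1 ∧ IsPathSystem p ∧
    (∀ v w, Covered p v w ↔ K.Adj v w) ∧
    ∃ ε ε', ε ≠ ε' ∧ (side p ε).head? = some u ∧ (side p ε').head? = some u

lemma exists_three_even {E : Set V} {a b c w₁ w₂ : V} (hE : E = {a, b, c}) (hab : a ≠ b)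
    (hac : a ≠ c) (hbc : b ≠ c) (h₁ : w₁ ∈ E) (h₂ : w₂ ∈ E) (h : w₁ ≠ w₂) :
    ∃ w₃, w₃ ≠ w₁ ∧ w₃ ≠ w₂ ∧ ∀ v, v ∈ E ↔ v = w₁ ∨ v = w₂ ∨ v = w₃ := by
  subst hE
  simp only [Set.mem_insert_iff, Set.mem_singleton_iff] at h₁ h₂ ⊢
  rcases h₁ with rfl | rfl | rfl <;> rcases h₂ with rfl | rfl | rfl
  · exact absurd rfl h
  · exact ⟨c, hac.symm, hbc.symm, fun v => by tauto⟩
  · exact ⟨b, hab.symm, hbc, fun v => by tauto⟩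
  · exact ⟨c, hbc.symm, hac.symm, fun v => by tauto⟩
  · exact absurd rfl h
  · exact ⟨a, hab, hac, fun v => by tauto⟩
  · exact ⟨b, hbc, hab.symm, fun v => by tauto⟩
  · exact ⟨a, hac, hab, fun v => by tauto⟩
  · exact absurd rfl h

/-- With three even vertices `u, b, c`, two paths end at `u` and two at `b`, none at `c`, and
one at every odd vertex. -/
lemma exists_pathSystem_of_three_even [Fintype V] (K : SimpleGraph V) {u b c : V} (hub : u ≠ b)
    (huc : c ≠ u) (hbc : c ≠ b) (hE : ∀ v, Even (ndeg K v) ↔ v = u ∨ v = b ∨ v = c) :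
    ∃ (k : ℕ) (p : Fin k → List V), 2 * k = Fintype.card V + 1 ∧ IsPathSystem p ∧
      (∀ v w, Covered p v w ↔ K.Adj v w) ∧ 2 ≤ endCount p u ∧
      ∀ v, v ≠ c → 1 ≤ endCount p v := by
  classical
  let f : V → ℕ := fun v => if v = c then 0 else if v = u then 2 else if v = b then 2 else 1
  have hf : ∀ v, f v + (if v = c then 1 else 0) =
      1 + (if v = u then 1 else 0) + (if v = b then 1 else 0) := by
    intro v
    simp only [f]
    split_ifs <;> grind
  obtain ⟨k, p, hk, hp, hc, he⟩ := exists_pathSystem K f (fun v => by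
      have := hE v
      simp only [f]
      rw [Nat.even_add]
      split_ifs <;> simp_all) (fun v w _ _ _ _ hv hw => by
      simp only [f] at hv hw
      split_ifs at hv hw
      grind)
  refine ⟨k, p, ?_, hp, hc, ?_, fun v hv => ?_⟩
  · have h1 : ∑ v, (f v + (if v = c then 1 else 0)) =
        ∑ v, (1 + (if v = u then 1 else 0) + (if v = b then 1 else 0)) :=
      Finset.sum_congr rfl fun v _ => hf v
    simp only [Finset.sum_add_distrib, Finset.sum_ite_eq', Finset.mem_univ, if_true,
      Finset.sum_const, Finset.card_univ, smul_eq_mul, mul_one] at h1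
    omega
  · rw [he]; simp [f, huc.symm]
  · rw [he]; simp only [f]; split_ifs <;> simp_all

lemma side_cons_succ {k : ℕ} {p : Fin k → List V} {l : List V} {ε : Fin k × Bool} :
    side (Fin.cons l p : Fin (k + 1) → List V) (ε.1.succ, ε.2) = side p ε := by
  simp [side]

lemma covered_cons {k : ℕ} {p : Fin k → List V} {l : List V} {v w : V} :
    Covered (Fin.cons l p : Fin (k + 1) → List V) v w ↔ Consec l v w ∨ Covered p v w := by
  simp [Covered, Fin.exists_fin_succ]

lemma IsPathSystem.cons {k : ℕ} {p : Fin k → List V} (hp : IsPathSystem p) {l : List V}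
    (hne : l ≠ []) (hnd : l.Nodup) (hl : ∀ v w, Consec l v w → ¬ Covered p v w) :
    IsPathSystem (Fin.cons l p : Fin (k + 1) → List V) := by
  refine ⟨Fin.cases (by simpa) (by simpa using hp.ne_nil),
    Fin.cases (by simpa) (by simpa using hp.nodup), fun i j v w => ?_⟩
  refine Fin.cases ?_ (fun i => ?_) i <;> refine Fin.cases ?_ (fun j => ?_) j
  · simp
  · simpa using fun h h' => absurd ⟨j, h'⟩ (hl v w h)
  · simpa using fun h h' => absurd ⟨i, h⟩ (hl v w h')
  · simpa using hp.unique i j v w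

lemma IsSETGraph.hasDoubleEnd_of_odd [Fintype V] {K : SimpleGraph V} {u w₁ w₂ w₃ : V}
    (hu : Odd (ndeg K u)) (h12 : w₁ ≠ w₂) (h31 : w₃ ≠ w₁) (h32 : w₃ ≠ w₂)
    (hE : ∀ v, Even (ndeg K v) ↔ v = w₁ ∨ v = w₂ ∨ v = w₃)
    (h₁ : K.Adj u w₁) (h₂ : K.Adj u w₂) : HasDoubleEnd K u (Fintype.card V) := by
  classical
  set H₁ := K.deleteEdges {s(u, w₁)} with hH₁
  have h₂' : H₁.Adj u w₂ := by
    rw [hH₁, deleteEdges_adj]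
    exact ⟨h₂, by simp [h12.symm, h₁.ne]⟩
  set H := H₁.deleteEdges {s(u, w₂)} with hH
  have hadj : ∀ v w, K.Adj v w ↔ (H.Adj v w ∨ s(v, w) = s(u, w₁)) ∨ s(v, w) = s(u, w₂) := by
    intro v w
    have e1 : s(v, w) = s(u, w₁) → K.Adj v w := fun h => by rw [← mem_edgeSet, h]; exact h₁
    have e2 : s(v, w) = s(u, w₂) → K.Adj v w := fun h => by rw [← mem_edgeSet, h]; exact h₂
    rw [hH, hH₁, deleteEdges_adj, deleteEdges_adj, Set.mem_singleton_iff, Set.mem_singleton_iff]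
    tauto
  have hHw₁ : ¬ H.Adj u w₁ := by simp [hH, hH₁]
  have hHw₂ : ¬ H.Adj u w₂ := by simp [hH]
  have hu3 : u ≠ w₃ := by
    rintro rfl
    exact Nat.not_even_iff_odd.2 hu ((hE u).2 (by simp))
  let f : V → ℕ := fun v => if v = w₃ then 0 else 1
  obtain ⟨k, p, hk, hp, hc, he⟩ := exists_pathSystem H f (fun v => by
      have d1 := ndeg_deleteEdges h₁ v
      have d2 := ndeg_deleteEdges h₂' v
      rw [← hH₁] at d1
      rw [← hH] at d2
      have d3 := hE v
      have hu1 := h₁.ne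
      have hu2 := h₂.ne
      rw [Nat.even_iff] at d3 ⊢
      rw [Nat.odd_iff] at hu
      simp only [f]
      by_cases hv1 : v = w₁
      · subst hv1; simp [h12, h31.symm, hu1.symm] at *; omega
      · by_cases hv2 : v = w₂
        · subst hv2; simp [h12.symm, h32.symm, hu2.symm] at *; omega
        · by_cases hv3 : v = w₃
          · subst hv3; simp [hv1, hv2, hu3.symm] at *; omega
          · by_cases hvu : v = u
            · subst hvu; simp [hv1, hv2, hv3] at *; omega
            · simp [hv1, hv2, hv3, hvu] at *; omega)
    (fun v w _ _ _ _ hv hw => by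
      simp only [f] at hv hw
      split_ifs at hv hw
      grind)
  have hsum : (∑ v, f v) + 1 = Fintype.card V := by
    have : ∑ v, (f v + if v = w₃ then 1 else 0) = ∑ _v : V, 1 :=
      Finset.sum_congr rfl fun v _ => by simp only [f]; split_ifs <;> rfl
    simpa [Finset.sum_add_distrib] using this
  obtain ⟨y, hy, q, hq, hqc, hqe⟩ := hp.augment_or (x := u) (c := w₃) h12 h₁.ne' h₂.ne'
    (by rwa [hc]) (by rwa [hc]) (fun v hv => by simp [he, f, hv])
  obtain ⟨y', hy'⟩ : ∃ y', (y = w₁ ∧ y' = w₂) ∨ (y = w₂ ∧ y' = w₁) := by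
    rcases hy with rfl | rfl
    · exact ⟨w₂, by simp⟩
    · exact ⟨w₁, by simp⟩
  have huy' : u ≠ y' := by
    rcases hy' with ⟨-, rfl⟩ | ⟨-, rfl⟩
    · exact h₂.ne
    · exact h₁.ne
  have hqy' : ¬ Covered q u y' := by
    rw [hqc, hc]
    rcases hy' with ⟨rfl, rfl⟩ | ⟨rfl, rfl⟩
    · simp [hHw₂, h12.symm, h₁.ne]
    · simp [hHw₁, h12, h₂.ne]
  have huend : 1 ≤ endCount q u := by
    have h1 := hqe u
    have h2 : u ≠ y := by rcases hy with rfl | rfl; exacts [h₁.ne, h₂.ne]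
    simp only [h2, if_false, if_true] at h1
    omega
  obtain ⟨ε, hε⟩ := exists_end huend
  refine ⟨k + 1, Fin.cons [u, y'] q, by omega, hq.cons (by simp) (by simpa using huy') ?_, ?_,
    (0, false), (ε.1.succ, ε.2), ?_, by simp [side], by rw [side_cons_succ, hε]⟩
  · intro v w h hcov
    rcases Sym2.eq_iff.1 (consec_pair.1 h) with ⟨rfl, rfl⟩ | ⟨rfl, rfl⟩
    · exact hqy' hcov
    · exact hqy' hcov.symm
  · intro v w
    rw [covered_cons, consec_pair, hqc, hc, hadj]
    rcases hy' with ⟨rfl, rfl⟩ | ⟨rfl, rfl⟩ <;> tauto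
  · exact fun h => Fin.succ_ne_zero _ (congrArg Prod.fst h).symm

lemma IsSETGraph.hasDoubleEnd [Fintype V] {K : SimpleGraph V} (hK : IsSETGraph K) (u : V) :
    HasDoubleEnd K u (Fintype.card V) := by
  obtain ⟨⟨a, b, c, hab, hac, hbc, hE, -, -, -⟩, hodd⟩ := hK
  rcases Nat.even_or_odd (ndeg K u) with hu | hu
  · have hw : ∃ w, w ∈ {v | Even (ndeg K v)} ∧ u ≠ w := by
      by_cases h : u = a
      · exact ⟨b, by rw [hE]; simp, by rwa [h]⟩
      · exact ⟨a, by rw [hE]; simp, h⟩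
    obtain ⟨w, hw, huw⟩ := hw
    obtain ⟨t, htu, htw, hE'⟩ := exists_three_even hE hab hac hbc hu hw huw
    obtain ⟨k, p, hk, hp, hc, he, -⟩ := exists_pathSystem_of_three_even K huw htu htw hE'
    exact ⟨k, p, hk.le, hp, hc, exists_two_ends he⟩
  · obtain ⟨w₁, w₂, h12, h₁, h₂, he₁, he₂⟩ := hodd u hu
    obtain ⟨t, ht1, ht2, hE'⟩ := exists_three_even hE hab hac hbc he₁ he₂ h12
    exact hasDoubleEnd_of_odd hu h12 ht1 ht2 hE' h₁ h₂

lemma Consec.ne {l : List V} (hl : l.Nodup) {v w : V} (h : Consec l v w) : v ≠ w := by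
  rcases h with h | h
  · simpa using h.sublist.nodup hl
  · simpa [eq_comm] using h.sublist.nodup hl

section Map

variable {W : Type*} {k : ℕ} {f : W → V} {p : Fin k → List W}

lemma side_map {ε : Fin k × Bool} : side (fun i => (p i).map f) ε = (side p ε).map f := by
  unfold side
  split_ifs <;> simp

lemma covered_map {v w : V} : Covered (fun i => (p i).map f) v w ↔
    ∃ v' w', f v' = v ∧ f w' = w ∧ Covered p v' w' := by
  simp only [Covered, consec_map]
  grind

lemma IsPathSystem.map (hp : IsPathSystem p) (hf : Function.Injective f) :
    IsPathSystem (fun i => (p i).map f) := by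
  refine ⟨by simpa using hp.ne_nil, fun i => (hp.nodup i).map hf, fun i j v w hi hj => ?_⟩
  obtain ⟨v', w', rfl, rfl, hi'⟩ := consec_map.1 hi
  obtain ⟨v'', w'', hv, hw, hj'⟩ := consec_map.1 hj
  rw [hf hv, hf hw] at hj'
  exact hp.unique i j v' w' hi' hj'

end Map

/-- Adding to a SET graph a vertex `u` adjacent to an odd vertex `x` and an even vertex `y`. -/
lemma hasDoubleEnd_of_induce [Fintype V] {K : SimpleGraph V} {u x y : V} (hx : x ≠ u) (hy : y ≠ u)
    (hN : K.neighborSet u = {x, y}) (hK : IsSETGraph (K.induce {v | v ≠ u}))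
    (hxo : Odd (ndeg (K.induce {v | v ≠ u}) ⟨x, hx⟩))
    (hye : Even (ndeg (K.induce {v | v ≠ u}) ⟨y, hy⟩)) :
    HasDoubleEnd K u (Fintype.card V) := by
  classical
  obtain ⟨⟨a, b, c, hab, hac, hbc, hE, -, -, -⟩, -⟩ := hK
  have hxy : x ≠ y := by
    rintro rfl
    exact Nat.not_even_iff_odd.2 hxo hye
  obtain ⟨w, hw, hyw⟩ : ∃ w, w ∈ {v | Even (ndeg (K.induce {v | v ≠ u}) v)} ∧
      (⟨y, hy⟩ : {v | v ≠ u}) ≠ w := by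
    by_cases h : (⟨y, hy⟩ : {v | v ≠ u}) = a
    · exact ⟨b, by rw [hE]; simp, by rwa [h]⟩
    · exact ⟨a, by rw [hE]; simp, h⟩
  obtain ⟨t, hty, htw, hE'⟩ := exists_three_even hE hab hac hbc hye hw hyw
  obtain ⟨k, p, hk, hp, hc, hey, hepos⟩ := exists_pathSystem_of_three_even _ hyw hty htw hE'
  obtain ⟨εx, hεx⟩ := exists_end (hepos ⟨x, hx⟩ (by
    rintro rfl
    exact Nat.not_even_iff_odd.2 hxo ((hE' _).2 (by simp))))
  obtain ⟨εy, hεyx, hεy⟩ : ∃ ε : Fin k × Bool, ε.1 ≠ εx.1 ∧ (side p ε).head? = some ⟨y, hy⟩ := by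
    obtain ⟨ε₁, ε₂, hne, h₁, h₂⟩ := exists_two_ends hey
    by_contra! hcon
    have hx1 : ε₁ ≠ εx := by rintro rfl; rw [h₁] at hεx; simp [hxy.symm] at hεx
    have hx2 : ε₂ ≠ εx := by rintro rfl; rw [h₂] at hεx; simp [hxy.symm] at hεx
    refine hne ?_
    rw [eq_not_of_ne hx1 (by_contra fun h => hcon _ h h₁),
      eq_not_of_ne hx2 (by_contra fun h => hcon _ h h₂)]
  have hcard : Fintype.card {v | v ≠ u} + 1 = Fintype.card V := by
    have h := Fintype.card_subtype_compl (fun v => v = u)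
    have : 0 < Fintype.card V := Fintype.card_pos_iff.2 ⟨u⟩
    simp only [Fintype.card_subtype_eq] at h
    change Fintype.card {v // v ≠ u} + 1 = _
    simp only [ne_eq]
    omega
  let p₀ : Fin k → List V := fun i => (p i).map Subtype.val
  have hp₀ : IsPathSystem p₀ := hp.map Subtype.val_injective
  have hc₀ : ∀ v w, Covered p₀ v w ↔ K.Adj v w ∧ v ≠ u ∧ w ≠ u := by
    intro v w
    rw [covered_map]
    simp only [hc]
    constructor
    · rintro ⟨v', w', rfl, rfl, h⟩
      exact ⟨h, v'.2, w'.2⟩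
    · rintro ⟨h, hv, hw⟩
      exact ⟨⟨v, hv⟩, ⟨w, hw⟩, rfl, rfl, h⟩
  have hmem : ∀ ε, u ∉ side p₀ ε := by
    intro ε h
    rw [side_map, List.mem_map] at h
    obtain ⟨v, -, hv⟩ := h
    exact v.2 hv
  have hεx₀ : (side p₀ εx).head? = some x := by rw [side_map, List.head?_map, hεx]; rfl
  have hεy₀ : (side p₀ εy).head? = some y := by rw [side_map, List.head?_map, hεy]; rfl
  have hpair : ∀ z v w, Consec ([u] ++ [z]) v w ↔ s(v, w) = s(u, z) := fun z v w => consec_pair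
  obtain ⟨hp₁, hc₁⟩ := hp₀.attach hεx₀ (l := [u]) (by simpa using ⟨hmem _, hp₀.nodup_side _⟩)
    (fun v w h => by
      rw [hc₀]
      rw [hpair, Sym2.eq_iff] at h
      rintro ⟨-, hv, hw⟩
      exact h.elim (fun h => hv h.1) (fun h => hw h.2))
  set p₁ := setSide p₀ εx ([u] ++ side p₀ εx)
  have hsy : side p₁ εy = side p₀ εy := side_setSide_of_ne hεyx
  have hsx : side p₁ εx = [u] ++ side p₀ εx := side_setSide_self
  obtain ⟨hp₂, hc₂⟩ := hp₁.attach (ε := εy) (by rw [hsy, hεy₀]) (l := [u])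
    (by rw [hsy]; simpa using ⟨hmem _, hp₀.nodup_side _⟩)
    (fun v w h => by
      rw [hc₁, hc₀, hpair]
      rw [hpair] at h
      rintro (⟨-, hv, hw⟩ | h')
      · rw [Sym2.eq_iff] at h
        exact h.elim (fun h => hv h.1) (fun h => hw h.2)
      · rw [h', Sym2.congr_right] at h
        exact hxy h)
  have hk' : 2 * k ≤ Fintype.card V + 1 := by
    have h := Fintype.card_congr (Equiv.refl {v | v ≠ u})
    exact (hk.trans ((congrArg (· + 1) h).trans hcard)).le.trans (Nat.le_succ _)
  refine ⟨k, _, hk', hp₂, fun v w => ?_, εx, εy, fun h => hεyx (by rw [h]), ?_, ?_⟩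
  · rw [hc₂, hc₁, hc₀, hpair, hpair]
    have hu : ∀ z, K.Adj u z ↔ z = x ∨ z = y := fun z => by
      rw [← mem_neighborSet, hN]; simp
    by_cases hv : v = u
    · subst hv
      simp [hu, hx.symm, hy.symm]
    · by_cases hw : w = u
      · subst hw
        rw [K.adj_comm, hu]
        simp [hv]
      · simp [hv, hw]
  · rw [side_setSide_of_ne hεyx.symm, hsx]; rfl
  · rw [side_setSide_self]; rfl

/-- A path meeting `S` only in `u` can be glued to two path ends at `u`. -/
lemma HasDoubleEnd.attach_path {S : Set V} {K : SimpleGraph ↥S} {u : ↥S} {n : ℕ}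
    (hK : HasDoubleEnd K u n) {l₁ l₂ : List V} (hnd : (l₁ ++ u.1 :: l₂).Nodup)
    (h₁ : ∀ v ∈ l₁, v ∉ S) (h₂ : ∀ v ∈ l₂, v ∉ S) :
    ∃ (k : ℕ) (p : Fin k → List V), 2 * k ≤ n + 1 ∧ IsPathSystem p ∧
      ∀ v w, Covered p v w ↔
        (∃ v' w' : ↥S, v'.1 = v ∧ w'.1 = w ∧ K.Adj v' w') ∨ Consec (l₁ ++ u.1 :: l₂) v w := by
  obtain ⟨k, p, hk, hp, hc, ε, ε', hne, hε, hε'⟩ := hK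
  let p₀ : Fin k → List V := fun i => (p i).map Subtype.val
  have hp₀ : IsPathSystem p₀ := hp.map Subtype.val_injective
  have hc₀ : ∀ v w, Covered p₀ v w ↔ ∃ v' w' : ↥S, v'.1 = v ∧ w'.1 = w ∧ K.Adj v' w' := by
    intro v w
    rw [covered_map]
    simp only [hc]
  have hcS : ∀ v w, Covered p₀ v w → v ∈ S ∧ w ∈ S := by
    intro v w h
    obtain ⟨v', w', rfl, rfl, -⟩ := (hc₀ v w).1 h
    exact ⟨v'.2, w'.2⟩
  have hmem : ∀ ε, ∀ v ∈ side p₀ ε, v ∈ S := by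
    intro ε v h
    rw [side_map, List.mem_map] at h
    obtain ⟨v, -, rfl⟩ := h
    exact v.2
  have hε₀ : (side p₀ ε).head? = some u.1 := by rw [side_map, List.head?_map, hε]; rfl
  have hε'₀ : (side p₀ ε').head? = some u.1 := by rw [side_map, List.head?_map, hε']; rfl
  have hnd₁ : (l₁ ++ [u.1]).Nodup := by grind
  have hnd₂ : (l₂.reverse ++ [u.1]).Nodup := by grind
  obtain ⟨hp₁, hc₁⟩ := hp₀.attach hε₀ (l := l₁)
    (by have := hp₀.nodup_side ε; have := hmem ε; grind)
    (fun v w h hcov => by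
      have h3 := hcS v w hcov
      have h4 := h.ne hnd₁
      have h5 := h.mem_left
      have h6 := h.mem_right
      grind)
  set p₁ := setSide p₀ ε (l₁ ++ side p₀ ε) with hp₁def
  have hlast : (l₁ ++ side p₀ ε).getLast? = (side p₀ ε).getLast? := by
    rw [List.getLast?_append_of_ne_nil]
    intro h
    simp [h] at hε₀
  have hε'₁ : (side p₁ ε').head? = some u.1 := by
    rw [head?_side_setSide_of_ne hlast hne.symm, hε'₀]
  have hmem₁ : ∀ v ∈ side p₁ ε', v ∈ S ∨ v ∈ l₁ := by
    intro v hv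
    by_cases h1 : ε'.1 = ε.1
    · rw [eq_not_of_ne hne.symm h1, side_not, Prod.mk.eta, side_setSide_self] at hv
      have := hmem ε v
      grind
    · rw [side_setSide_of_ne h1] at hv
      exact Or.inl (hmem _ v hv)
  obtain ⟨hp₂, hc₂⟩ := hp₁.attach hε'₁ (l := l₂.reverse)
    (by have := hp₁.nodup_side ε'; grind)
    (fun v w h hcov => by
      have h4 := h.ne hnd₂
      have h5 := h.mem_left
      have h6 := h.mem_right
      rcases (hc₁ v w).1 hcov with hcov | hcov
      · have h3 := hcS v w hcov
        grind
      · have h7 := hcov.mem_left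
        have h8 := hcov.mem_right
        grind)
  refine ⟨k, _, hk, hp₂, fun v w => ?_⟩
  have hrev : Consec (l₂.reverse ++ [u.1]) v w ↔ Consec (u.1 :: l₂) v w := by
    rw [← consec_reverse]; simp
  rw [hc₂, hc₁, hc₀, hrev, consec_append_cons_iff (A := l₁) (B := l₂), or_assoc]

lemma pn_le_of_pathSystem {G : SimpleGraph V} {k : ℕ} {p : Fin k → List V} (hp : IsPathSystem p)
    (hc : ∀ v w, Covered p v w ↔ G.Adj v w) : pn G ≤ k := by
  have hchain : ∀ i, (p i).IsChain G.Adj := by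
    intro i
    rw [List.isChain_iff_forall_rel_of_append_cons_cons]
    intro a b l₁ l₂ h
    exact (hc a b).1 ⟨i, Or.inl ⟨l₁, l₂, by simp [h]⟩⟩
  let w : Fin k → Σ a b : V, G.Walk a b :=
    fun i => ⟨_, _, Walk.ofSupport (p i) (hp.ne_nil i) (hchain i)⟩
  have hsupp : ∀ i, (w i).2.2.support = p i := fun i => Walk.support_ofSupport _ _
  have hedge : ∀ i a b, s(a, b) ∈ (w i).2.2.edges ↔ Consec (p i) a b := by
    intro i a b
    rw [← Walk.infix_support_iff_mem_edges, hsupp]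
    rfl
  let D : PathDecomp G :=
    { paths := ((List.finRange k).filter fun i => 0 < (w i).2.2.length).map w
      nontrivial := by
        intro q hq
        obtain ⟨i, hi, rfl⟩ := List.mem_map.1 hq
        simpa using (List.mem_filter.1 hi).2
      isPath := by
        intro q hq
        obtain ⟨i, -, rfl⟩ := List.mem_map.1 hq
        rw [Walk.isPath_def, hsupp]
        exact hp.nodup i
      edgeDisjoint := by
        rw [List.pairwise_map]
        refine List.Pairwise.imp ?_ ((List.nodup_finRange k).filter _)
        intro i j hij e
        induction e with
        | _ a b =>
          rw [hedge, hedge]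
          exact fun hi hj => hij (hp.unique i j a b hi hj)
      covers := by
        intro e
        induction e with
        | _ a b =>
          intro he
          obtain ⟨i, hi⟩ := (hc a b).2 he
          have hi' := (hedge i a b).2 hi
          refine ⟨w i, List.mem_map.2 ⟨i, List.mem_filter.2 ⟨List.mem_finRange i, ?_⟩, rfl⟩, hi'⟩
          rw [← Walk.length_edges]
          simpa using List.length_pos_of_mem hi' }
  calc pn G ≤ pdCard D := Nat.sInf_le ⟨D, rfl⟩
    _ ≤ k := by
      simp only [pdCard, D, List.length_map]
      exact (List.length_filter_le _ _).trans (by simp)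

theorem eset_plus_path_path_number [Fintype V] (G : SimpleGraph V)
    (S : Set V) (K : SimpleGraph ↥S) (u : V) (hu : u ∈ S)
    (hK : IsESETWithConn K ⟨u, hu⟩)
    (a b : V) (P : G.Walk a b) (hP : P.IsPath)
    (hedges : G.edgeSet = Sym2.map Subtype.val '' K.edgeSet ∪ {e | e ∈ P.edges})
    (hdisj : Disjoint (Sym2.map Subtype.val '' K.edgeSet) {e | e ∈ P.edges})
    (hshare : S ∩ {v | v ∈ P.support} = {u})
    (hspan : S ∪ {v | v ∈ P.support} = Set.univ) :
    pn G ≤ (S.ncard + 1) / 2 := by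
  classical
  have hdouble : HasDoubleEnd K ⟨u, hu⟩ S.ncard := by
    rw [← Nat.card_coe_set_eq, Nat.card_eq_fintype_card]
    rcases hK with hK | ⟨x, y, hx, hy, hN, hK, hxo, hye⟩
    · exact hK.hasDoubleEnd _
    · exact hasDoubleEnd_of_induce hx hy hN hK hxo hye
  have hmem : ∀ v, v ∈ S → v ∈ P.support → v = u := fun v hv hv' => by
    have : v ∈ S ∩ {v | v ∈ P.support} := ⟨hv, hv'⟩
    simpa [hshare] using this
  have huP : u ∈ P.support := by
    have : u ∈ S ∩ {v | v ∈ P.support} := by simp [hshare]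
    exact this.2
  obtain ⟨l₁, l₂, hl⟩ := List.append_of_mem huP
  have hnd : (l₁ ++ u :: l₂).Nodup := hl ▸ hP.support_nodup
  obtain ⟨k, p, hk, hp, hc⟩ := hdouble.attach_path hnd
    (fun v hv hS => by
      have := hmem v hS (by simp [hl, hv])
      grind)
    (fun v hv hS => by
      have := hmem v hS (by simp [hl, hv])
      grind)
  refine (pn_le_of_pathSystem hp fun v w => ?_).trans (by omega)
  rw [hc, ← mem_edgeSet, hedges, Set.mem_union, Set.mem_ofPred_eq,
    ← Walk.infix_support_iff_mem_edges, hl]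
  refine or_congr ?_ Iff.rfl
  constructor
  · rintro ⟨v', w', rfl, rfl, h⟩
    exact ⟨s(v', w'), h, rfl⟩
  · rintro ⟨e, he, heq⟩
    induction e with
    | _ v' w' =>
      rcases Sym2.eq_iff.1 (heq : s(v'.1, w'.1) = s(v, w)) with ⟨rfl, rfl⟩ | ⟨rfl, rfl⟩
      · exact ⟨v', w', rfl, rfl, he⟩
      · exact ⟨w', v', rfl, rfl, (he : K.Adj v' w').symm⟩
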